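/- Let w_1, w_2, x_1, x_2 ∈ ℝ^m be unit vectors and y_1, y_2 ∈ {−1,1} be labels with y_1⟨w_1, x_1⟩ = y_2⟨w_2, x_2⟩. Then the real random variables y_1⟨h_{A,t}(w_1), A x_1⟩ and y_2⟨h_{A,t}(w_2), A x_2⟩ have the same distribution; i.e., the distribution of y⟨h_{A,t}(w), Ax⟩ is completely determined by the margin y⟨w, x⟩. -/

import Mathlib

/-! A linear image `V a` of a vector `a` of i.i.d. centred Gaussians is a centred Gaussian vector
whose covariance is a multiple of `V Vᵀ`. Hence the pairs `(⟨a, w⟩, ⟨a, y x⟩)`, for the rows `a` of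
`A`, are i.i.d. with a law determined by the Gram matrix of `w` and `y x`. Since
`y h_r ⟨a, x⟩ = h_r ⟨a, y x⟩`, the signed rounded margin is a fixed function of these pairs and of
the independent thresholds `t`. For unit vectors and `y = ± 1` the Gram matrix has diagonal
entries `1` and off-diagonal entries the margin `y ⟨w, x⟩`.
-/

open MeasureTheory ProbabilityTheory

noncomputable section

/-- Dot product on `Fin m → ℝ`. -/
def dotp {m : ℕ} (w x : Fin m → ℝ) : ℝ := ∑ j, w j * x j

/-- Margin loss `L_D^γ(w)` of `w` under a distribution `D` on `ℝ^m × ℝ`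
(labels are encoded as reals in `{-1,1}`). -/
def lossD {m : ℕ} (D : Measure ((Fin m → ℝ) × ℝ)) (γ : ℝ) (w : Fin m → ℝ) : ℝ :=
  (D {p | p.2 * dotp w p.1 ≤ γ}).toReal

/-- Empirical margin loss `L_S^γ(w)` on a training set `S` of `n` labeled points. -/
def lossS {m n : ℕ} (S : Fin n → (Fin m → ℝ) × ℝ) (γ : ℝ) (w : Fin m → ℝ) : ℝ :=
  (Nat.card {i : Fin n // (S i).2 * dotp w (S i).1 ≤ γ} : ℝ) / n

/-- The i.i.d. sample measure `D^n` over training sets of size `n`. -/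
def trainM {m : ℕ} (D : Measure ((Fin m → ℝ) × ℝ)) (n : ℕ) :
    Measure (Fin n → (Fin m → ℝ) × ℝ) := Measure.pi fun _ => D

/-- Spacing of the rounding grid: `(10 √k)⁻¹`. -/
def gridStep (k : ℕ) : ℝ := (10 * Real.sqrt k)⁻¹

/-- The largest grid point `(1/2)(10√k)⁻¹ + z(10√k)⁻¹ ≤ g`. -/
def roundDown (k : ℕ) (g : ℝ) : ℝ :=
  gridStep k / 2 + (⌊(g - gridStep k / 2) / gridStep k⌋ : ℝ) * gridStep k

/-- The probability `p(z)` of rounding `g` down, chosen so the rounding is unbiased. -/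
def roundProb (k : ℕ) (g : ℝ) : ℝ := 1 - (g - roundDown k g) / gridStep k

/-- Matrix-vector product, `(Aw)_i = ∑ j A i j * w j`. -/
def matVec {k m : ℕ} (A : Fin k → Fin m → ℝ) (w : Fin m → ℝ) : Fin k → ℝ :=
  fun i => ∑ j, A i j * w j

/-- The randomized rounding `h_{A,t}(w)` of `Aw` to the grid. -/
def hRound {k m : ℕ} (A : Fin k → Fin m → ℝ) (t : Fin k → ℝ) (w : Fin m → ℝ) :
    Fin k → ℝ :=
  fun i => if t i ≤ roundProb k (matVec A w i)
    then roundDown k (matVec A w i)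
    else roundDown k (matVec A w i) + gridStep k

/-- The joint law of `(A, t)`: `A` has i.i.d. `N(0,1/k)` entries and `t` has i.i.d.
uniform `[0,1]` coordinates, independent of `A`. -/
def roundMeasure (k m : ℕ) : Measure ((Fin k → Fin m → ℝ) × (Fin k → ℝ)) :=
  (Measure.pi fun _ : Fin k => Measure.pi fun _ : Fin m =>
      gaussianReal 0 (k : NNReal)⁻¹).prod
    (Measure.pi fun _ : Fin k => volume.restrict (Set.Icc (0 : ℝ) 1))

/-- Reduced setup: the data domain `X ⊆ S^d ⊂ ℝ^{d+1}` of unit vectors whose first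
`d` coordinates have norm at most `cγ`. -/
def Xset (d : ℕ) (cγ : ℝ) : Set (Fin (d+1) → ℝ) :=
  {x | (∑ j, x j ^ 2) = 1 ∧ (∑ j : Fin d, x j.castSucc ^ 2) ≤ cγ ^ 2}

/-- Reduced setup: the hypothesis class `H = S^{d-1} × {0} ⊂ ℝ^{d+1}`. -/
def Hset (d : ℕ) : Set (Fin (d+1) → ℝ) :=
  {w | (∑ j, w j ^ 2) = 1 ∧ w (Fin.last d) = 0}

/-- `γ_i = 2^{i-1} n^{-1/2}`. -/
def γlo (n i : ℕ) : ℝ := 2 ^ (i - 1) / Real.sqrt n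

/-- `γ_{i+1} = 2^i n^{-1/2}`. -/
def γhi (n i : ℕ) : ℝ := 2 ^ i / Real.sqrt n

/-- `ℓ_{j+1} = 2^j n^{-1}`. -/
def ellhi (n j : ℕ) : ℝ := 2 ^ j / n

/-- The interval `L_j`: `L_0 = [0, n⁻¹]`, and `L_j = (2^{j-1}/n, 2^j/n]` for `j ≥ 1`. -/
def Lset (n j : ℕ) : Set ℝ :=
  if j = 0 then Set.Icc 0 (n : ℝ)⁻¹
  else Set.Ioc ((2 : ℝ) ^ (j - 1) / n) ((2 : ℝ) ^ j / n)

/-- Margin loss of `h ∈ ℝ^k` under the pushforward distribution `A·D`. -/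
def kLossD {k m : ℕ} (D : Measure ((Fin m → ℝ) × ℝ)) (γ : ℝ) (h : Fin k → ℝ)
    (A : Fin k → Fin m → ℝ) : ℝ :=
  (D {q | q.2 * (∑ r, h r * ∑ s, A r s * q.1 s) ≤ γ}).toReal

/-- Empirical margin loss of `h ∈ ℝ^k` on the transformed training set `A·S`. -/
def kLossS {k m n : ℕ} (S : Fin n → (Fin m → ℝ) × ℝ) (γ : ℝ) (h : Fin k → ℝ)
    (A : Fin k → Fin m → ℝ) : ℝ :=
  (Nat.card {i : Fin n // (S i).2 * (∑ r, h r * ∑ s, A r s * (S i).1 s) ≤ γ} : ℝ) / n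

/-- Specification of the function `φ` from the paper, for margin parameter `γi`:
on `[-cγ, 0]` it equals the probability (over the randomized rounding) that the rounded
margin exceeds `γi/2` given original margin `α`; on `(0, γi]` it interpolates linearly to
`0`; on `(γi, cγ]` it is `0`. -/
def phiSpec (d k : ℕ) (cγ γi : ℝ) (φ : ℝ → ℝ) : Prop :=
  (∀ (w x : Fin (d+1) → ℝ) (y : ℝ), w ∈ Hset d → x ∈ Xset d cγ →
      (y = 1 ∨ y = -1) → y * dotp w x ≤ 0 →
      φ (y * dotp w x) =
        (roundMeasure k (d+1)
          {p | γi / 2 < y * ∑ r, hRound p.1 p.2 w r * ∑ s, p.1 r s * x s}).toReal) ∧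
  (∀ α : ℝ, 0 < α → α ≤ γi → φ α = ((γi - α) / γi) * φ 0) ∧
  (∀ α : ℝ, γi < α → α ≤ cγ → φ α = 0)

/-- Specification of the function `ρ` from the paper, for margin parameter `γi`. -/
def rhoSpec (d k : ℕ) (cγ γi : ℝ) (ρ : ℝ → ℝ) : Prop :=
  (∀ (w x : Fin (d+1) → ℝ) (y : ℝ), w ∈ Hset d → x ∈ Xset d cγ →
      (y = 1 ∨ y = -1) → γi < y * dotp w x →
      ρ (y * dotp w x) =
        (roundMeasure k (d+1)
          {p | y * ∑ r, hRound p.1 p.2 w r * ∑ s, p.1 r s * x s ≤ γi / 2}).toReal) ∧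
  (∀ α : ℝ, 0 < α → α ≤ γi →
      ∀ (w x : Fin (d+1) → ℝ) (y : ℝ), w ∈ Hset d → x ∈ Xset d cγ →
      (y = 1 ∨ y = -1) → y * dotp w x = γi →
      ρ α = (α / γi) *
        (roundMeasure k (d+1)
          {p | y * ∑ r, hRound p.1 p.2 w r * ∑ s, p.1 r s * x s ≤ γi / 2}).toReal) ∧
  (∀ α : ℝ, -cγ ≤ α → α ≤ 0 → ρ α = 0)

section GaussianVector

open scoped Matrix NNReal

variable {ι κ : Type*} [Fintype ι] [Fintype κ]

lemma charFun_map_toLp_pi_gaussianReal (c : ℝ≥0) (t : EuclideanSpace ℝ ι) :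
    charFun ((Measure.pi fun _ : ι => gaussianReal 0 c).map (WithLp.toLp 2)) t =
      Complex.exp (-(c * ‖t‖ ^ 2 / 2 : ℝ)) := by
  simp only [charFun_pi, charFun_gaussianReal, ← Complex.exp_sum, EuclideanSpace.real_norm_sq_eq]
  congr 1
  push_cast
  rw [Finset.mul_sum, Finset.sum_div, ← Finset.sum_neg_distrib]
  exact Finset.sum_congr rfl fun i _ => by ring

lemma charFun_map_mulVec (μ : Measure (ι → ℝ)) (V : Matrix κ ι ℝ) (t : EuclideanSpace ℝ κ) :
    charFun (μ.map fun a => WithLp.toLp 2 (V *ᵥ a)) t =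
      charFun (μ.map (WithLp.toLp 2)) (WithLp.toLp 2 (Vᵀ *ᵥ t.ofLp)) := by
  rw [charFun_apply, charFun_apply, integral_map (by fun_prop) (by fun_prop),
    integral_map (by fun_prop) (by fun_prop)]
  refine integral_congr_ae (.of_forall fun a => ?_)
  have hadjoint : inner ℝ (WithLp.toLp 2 (V *ᵥ a)) t =
      inner ℝ (WithLp.toLp 2 a) (WithLp.toLp 2 (Vᵀ *ᵥ t.ofLp)) := by
    simp [EuclideanSpace.inner_eq_star_dotProduct, Matrix.dotProduct_mulVec,
      Matrix.mulVec_transpose]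
  simp only [hadjoint]

lemma map_mulVec_pi_gaussianReal [DecidableEq κ] (c : ℝ≥0) (V : Matrix κ ι ℝ) :
    (Measure.pi fun _ : ι => gaussianReal 0 c).map (fun a => WithLp.toLp 2 (V *ᵥ a)) =
      multivariateGaussian 0 (c • (V * Vᵀ)) := by
  have hpos : (c • (V * Vᵀ)).PosSemidef := by
    rw [← Matrix.conjTranspose_eq_transpose_of_trivial]
    exact (Matrix.posSemidef_self_mul_conjTranspose V).smul c.2
  refine Measure.ext_of_charFun (funext fun t => ?_)
  have hnorm : ‖WithLp.toLp 2 (Vᵀ *ᵥ t.ofLp)‖ ^ 2 = t.ofLp ⬝ᵥ (V * Vᵀ) *ᵥ t.ofLp := by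
    rw [EuclideanSpace.real_norm_sq_eq, ← Matrix.mulVec_mulVec, Matrix.dotProduct_mulVec,
      ← Matrix.mulVec_transpose]
    simp [dotProduct, sq]
  rw [charFun_map_mulVec, charFun_map_toLp_pi_gaussianReal, charFun_multivariateGaussian hpos,
    hnorm]
  simp [Matrix.smul_mulVec, NNReal.smul_def]

end GaussianVector

section Rounding

open scoped Matrix

/-- The randomized rounding of a single real `g` with threshold `t`: the coordinates of `hRound`
are `randomRound k (matVec A w i) (t i)`. -/
def randomRound (k : ℕ) (g t : ℝ) : ℝ :=
  if t ≤ roundProb k g then roundDown k g else roundDown k g + gridStep k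

/-- The inner product `∑ r, h_r v_r` of the rounding `h` of `u` with `v`, where `q.1` lists the
pairs `(u_r, v_r)` and `q.2` the rounding thresholds. -/
def roundedInner (k : ℕ) (q : (Fin k → EuclideanSpace ℝ (Fin 2)) × (Fin k → ℝ)) : ℝ :=
  ∑ r, randomRound k (q.1 r 0) (q.2 r) * q.1 r 1

lemma measurable_roundDown (k : ℕ) : Measurable (roundDown k) := by
  unfold roundDown
  fun_prop

lemma measurable_roundProb (k : ℕ) : Measurable (roundProb k) := by
  have := measurable_roundDown k
  unfold roundProb
  fun_prop

lemma measurable_randomRound (k : ℕ) : Measurable (Function.uncurry (randomRound k)) := by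
  have hdown : Measurable fun p : ℝ × ℝ => roundDown k p.1 :=
    (measurable_roundDown k).comp measurable_fst
  exact Measurable.ite
    (measurableSet_le measurable_snd ((measurable_roundProb k).comp measurable_fst))
    hdown (hdown.add_const _)

lemma measurable_roundedInner (k : ℕ) : Measurable (roundedInner k) := by
  refine Finset.measurable_sum _ fun r _ => Measurable.mul ?_ (by fun_prop)
  exact (measurable_randomRound k).comp
    (f := fun q : (Fin k → EuclideanSpace ℝ (Fin 2)) × (Fin k → ℝ) => (q.1 r 0, q.2 r))
    (by fun_prop)

variable {m : ℕ}

/-- The `2 × m` matrix with rows `w` and `y x`: it maps a row `a` of `A` to the pair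
`(⟨a, w⟩, ⟨a, y x⟩)` through which the margin of `(w, x, y)` depends on `a`. -/
def marginRows (w x : Fin m → ℝ) (y : ℝ) : Matrix (Fin 2) (Fin m) ℝ :=
  Matrix.of ![w, y • x]

/-- The Gram matrix of `w` and `y x`. -/
def marginGram (w x : Fin m → ℝ) (y : ℝ) : Matrix (Fin 2) (Fin 2) ℝ :=
  !![∑ j, w j ^ 2, y * dotp w x; y * dotp w x, y ^ 2 * ∑ j, x j ^ 2]

lemma marginRows_mul_transpose (w x : Fin m → ℝ) (y : ℝ) :
    marginRows w x y * (marginRows w x y)ᵀ = marginGram w x y := by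
  have hrow₀ : marginRows w x y 0 = w := rfl
  have hrow₁ : marginRows w x y 1 = y • x := rfl
  have hww : w ⬝ᵥ w = ∑ j, w j ^ 2 := by simp only [dotProduct, sq]
  have hxx : x ⬝ᵥ x = ∑ j, x j ^ 2 := by simp only [dotProduct, sq]
  have hwx : w ⬝ᵥ x = dotp w x := rfl
  have hxw : x ⬝ᵥ w = dotp w x := dotProduct_comm x w
  have hentry (i j : Fin 2) : (marginRows w x y * (marginRows w x y)ᵀ) i j =
      marginRows w x y i ⬝ᵥ marginRows w x y j := rfl
  ext i j
  rw [hentry]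
  fin_cases i <;> fin_cases j <;>
    simp [marginGram, hrow₀, hrow₁, hww, hwx, hxw, hxx, sq y, mul_assoc]

lemma roundedInner_marginRows_mulVec {k : ℕ} (A : Fin k → Fin m → ℝ) (t : Fin k → ℝ)
    (w x : Fin m → ℝ) (y : ℝ) :
    roundedInner k (fun r => WithLp.toLp 2 (marginRows w x y *ᵥ A r), t) =
      y * ∑ r, hRound A t w r * ∑ s, A r s * x s := by
  have hw (r : Fin k) : (marginRows w x y *ᵥ A r) 0 = matVec A w r := dotProduct_comm _ _
  have hx (r : Fin k) : (marginRows w x y *ᵥ A r) 1 = y * ∑ s, A r s * x s :=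
    (smul_dotProduct y x (A r)).trans (congrArg (y * ·) (dotProduct_comm x (A r)))
  simp only [roundedInner, hw, hx]
  rw [Finset.mul_sum]
  exact Finset.sum_congr rfl fun r _ => mul_left_comm _ _ _

theorem map_roundedMargin_roundMeasure (k : ℕ) (w x : Fin m → ℝ) (y : ℝ) :
    (roundMeasure k m).map (fun p => y * ∑ r, hRound p.1 p.2 w r * ∑ s, p.1 r s * x s) =
      ((Measure.pi fun _ : Fin k =>
            multivariateGaussian 0 ((k : NNReal)⁻¹ • marginGram w x y)).prod
          (Measure.pi fun _ : Fin k => volume.restrict (Set.Icc (0 : ℝ) 1))).map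
        (roundedInner k) := by
  have hpair : Measurable fun a : Fin m → ℝ => WithLp.toLp 2 (marginRows w x y *ᵥ a) := by
    fun_prop
  have hpairs : Measurable fun (A : Fin k → Fin m → ℝ) r =>
      WithLp.toLp 2 (marginRows w x y *ᵥ A r) := by
    fun_prop
  have := Measure.isProbabilityMeasure_map
    (μ := Measure.pi fun _ : Fin m => gaussianReal 0 (k : NNReal)⁻¹) hpair.aemeasurable
  rw [← marginRows_mul_transpose, ← map_mulVec_pi_gaussianReal,
    ← Measure.pi_map_pi fun _ => hpair.aemeasurable,
    ← Measure.map_id (μ := Measure.pi fun _ : Fin k => volume.restrict (Set.Icc (0 : ℝ) 1)),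
    Measure.map_prod_map _ _ hpairs measurable_id,
    Measure.map_map (measurable_roundedInner k) (hpairs.prodMap measurable_id)]
  exact congrArg (Measure.map · (roundMeasure k m)) <| funext fun p =>
    (roundedInner_marginRows_mulVec p.1 p.2 w x y).symm

end Rounding

theorem statement12_general (k : ℕ) {m₁ m₂ : ℕ}
    {w₁ x₁ : Fin m₁ → ℝ} {w₂ x₂ : Fin m₂ → ℝ} {y₁ y₂ : ℝ}
    (hw : ∑ j, w₁ j ^ 2 = ∑ j, w₂ j ^ 2)
    (hx : y₁ ^ 2 * ∑ j, x₁ j ^ 2 = y₂ ^ 2 * ∑ j, x₂ j ^ 2)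
    (hmargin : y₁ * dotp w₁ x₁ = y₂ * dotp w₂ x₂) :
    Measure.map (fun p => y₁ * ∑ r, hRound p.1 p.2 w₁ r * ∑ s, p.1 r s * x₁ s)
        (roundMeasure k m₁) =
      Measure.map (fun p => y₂ * ∑ r, hRound p.1 p.2 w₂ r * ∑ s, p.1 r s * x₂ s)
        (roundMeasure k m₂) := by
  have hgram : marginGram w₁ x₁ y₁ = marginGram w₂ x₂ y₂ := by
    simp only [marginGram, hw, hx, hmargin]
  rw [map_roundedMargin_roundMeasure, map_roundedMargin_roundMeasure, hgram]

/-- (Claim 3.8 of the paper.) The distribution of `y⟨h_{A,t}(w), Ax⟩`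
is completely determined by the margin `y⟨w,x⟩`, for unit vectors `w, x`. -/
theorem statement12 (k m : ℕ) (hk : 1 ≤ k)
    (w₁ w₂ x₁ x₂ : Fin m → ℝ) (y₁ y₂ : ℝ)
    (hw₁ : (∑ j, w₁ j ^ 2) = 1) (hx₁ : (∑ j, x₁ j ^ 2) = 1)
    (hw₂ : (∑ j, w₂ j ^ 2) = 1) (hx₂ : (∑ j, x₂ j ^ 2) = 1)
    (hy₁ : y₁ = 1 ∨ y₁ = -1) (hy₂ : y₂ = 1 ∨ y₂ = -1)
    (hmargin : y₁ * dotp w₁ x₁ = y₂ * dotp w₂ x₂) :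
    Measure.map (fun p => y₁ * ∑ r, hRound p.1 p.2 w₁ r * ∑ s, p.1 r s * x₁ s)
        (roundMeasure k m) =
      Measure.map (fun p => y₂ * ∑ r, hRound p.1 p.2 w₂ r * ∑ s, p.1 r s * x₂ s)
        (roundMeasure k m) := by
  have hx : y₁ ^ 2 * ∑ j, x₁ j ^ 2 = y₂ ^ 2 * ∑ j, x₂ j ^ 2 := by
    rw [hx₁, hx₂, sq_eq_one_iff.mpr hy₁, sq_eq_one_iff.mpr hy₂]
  exact statement12_general k (hw₁.trans hw₂.symm) hx hmargin
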